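/- Let n ≥ 3, let Ω ⊆ ℂ be open, let φ₁,…,φₙ be smooth real-valued functions on Ω with φ₁+⋯+φₙ = 0, and let u: Ω → ℂ be smooth. Define the Conformal Affine Toda connection components A_z = ∂Φ + ℰ₊ + u·E_{n,1} and A_{z̄} = Σ_{i=1}^{n−1} e^{φᵢ−φᵢ₊₁} E_{i+1,i} + ū·e^{−(φ₁−φₙ)} E_{1,n}. Then the connection d + A_z dz + A_{z̄} dz̄ is flat if and only if ∂̄u = 0 and, for every i = 1,…,n, ∂∂̄φᵢ = e^{φᵢ−φᵢ₊₁} − e^{φᵢ₋₁−φᵢ} − |u|²·e^{−(φ₁−φₙ)}·(δ_{i,1} − δ_{i,n}) (the Conformal Affine Toda equations, with conventions e^{φ₀−φ₁} := 0 and e^{φₙ−φₙ₊₁} := 0). -/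

import Mathlib

open Complex Matrix

/-- Wirtinger derivative `∂f = ½(∂ₓf − i ∂_y f)`. -/
noncomputable def wd (f : ℂ → ℂ) (z : ℂ) : ℂ :=
  (1 / 2 : ℂ) * (fderiv ℝ f z 1 - Complex.I * fderiv ℝ f z Complex.I)

/-- Wirtinger derivative `∂̄f = ½(∂ₓf + i ∂_y f)`. -/
noncomputable def wdb (f : ℂ → ℂ) (z : ℂ) : ℂ :=
  (1 / 2 : ℂ) * (fderiv ℝ f z 1 + Complex.I * fderiv ℝ f z Complex.I)

/-- Entrywise Wirtinger derivative `∂A` of a matrix-valued function. -/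
noncomputable def mwd {n : ℕ} (A : ℂ → Matrix (Fin n) (Fin n) ℂ) (z : ℂ) :
    Matrix (Fin n) (Fin n) ℂ :=
  Matrix.of fun i j => wd (fun w => A w i j) z

/-- Entrywise Wirtinger derivative `∂̄A` of a matrix-valued function. -/
noncomputable def mwdb {n : ℕ} (A : ℂ → Matrix (Fin n) (Fin n) ℂ) (z : ℂ) :
    Matrix (Fin n) (Fin n) ℂ :=
  Matrix.of fun i j => wdb (fun w => A w i j) z

/-- Conformal Affine Toda `A_z = ∂Φ + ℰ₊ + u·E_{n,1}`. -/
noncomputable def catAz (n : ℕ) (hn : 3 ≤ n) (φ : Fin n → ℂ → ℝ) (u : ℂ → ℂ) (z : ℂ) :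
    Matrix (Fin n) (Fin n) ℂ :=
  Matrix.of fun i j =>
    if i = j then wd (fun w => ((φ i w : ℝ) : ℂ)) z
    else if (j : ℕ) = (i : ℕ) + 1 then 1
    else if (i : ℕ) = n - 1 ∧ (j : ℕ) = 0 then u z
    else 0

/-- Conformal Affine Toda
`A_{z̄} = Σ_{i=1}^{n−1} e^{φᵢ−φᵢ₊₁} E_{i+1,i} + ū·e^{−(φ₁−φₙ)} E_{1,n}`. -/
noncomputable def catAzb (n : ℕ) (hn : 3 ≤ n) (φ : Fin n → ℂ → ℝ) (u : ℂ → ℂ) (z : ℂ) :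
    Matrix (Fin n) (Fin n) ℂ :=
  Matrix.of fun i j =>
    if (i : ℕ) = (j : ℕ) + 1 then ((Real.exp (φ j z - φ i z) : ℝ) : ℂ)
    else if (i : ℕ) = 0 ∧ (j : ℕ) = n - 1 then
      (starRingEnd ℂ) (u z) *
        ((Real.exp (-(φ ⟨0, by omega⟩ z - φ ⟨n - 1, by omega⟩ z)) : ℝ) : ℂ)
    else 0

lemma wd_ofReal_sub (f g : ℂ → ℝ) (z : ℂ) (hf : DifferentiableAt ℝ f z)
    (hg : DifferentiableAt ℝ g z) :
    wd (fun w => ((f w - g w : ℝ) : ℂ)) z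
      = wd (fun w => (f w : ℂ)) z - wd (fun w => (g w : ℂ)) z := by
  have hf' : HasFDerivAt (fun w => (f w : ℂ)) (Complex.ofRealCLM.comp (fderiv ℝ f z)) z :=
    Complex.ofRealCLM.hasFDerivAt.comp z hf.hasFDerivAt
  have hg' : HasFDerivAt (fun w => (g w : ℂ)) (Complex.ofRealCLM.comp (fderiv ℝ g z)) z :=
    Complex.ofRealCLM.hasFDerivAt.comp z hg.hasFDerivAt
  have h : HasFDerivAt (fun w => ((f w - g w : ℝ) : ℂ))
      (Complex.ofRealCLM.comp (fderiv ℝ f z - fderiv ℝ g z)) z :=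
    Complex.ofRealCLM.hasFDerivAt.comp z (hf.hasFDerivAt.sub hg.hasFDerivAt)
  unfold wd
  rw [hf'.fderiv, hg'.fderiv, h.fderiv]
  simp
  ring

lemma wd_ofReal_exp (f : ℂ → ℝ) (z : ℂ) (hf : DifferentiableAt ℝ f z) :
    wd (fun w => ((Real.exp (f w) : ℝ) : ℂ)) z
      = (Real.exp (f z) : ℂ) * wd (fun w => (f w : ℂ)) z := by
  have hf' : HasFDerivAt (fun w => (f w : ℂ)) (Complex.ofRealCLM.comp (fderiv ℝ f z)) z :=
    Complex.ofRealCLM.hasFDerivAt.comp z hf.hasFDerivAt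
  have h : HasFDerivAt (fun w => ((Real.exp (f w) : ℝ) : ℂ))
      (Complex.ofRealCLM.comp (Real.exp (f z) • fderiv ℝ f z)) z :=
    Complex.ofRealCLM.hasFDerivAt.comp z hf.hasFDerivAt.exp
  unfold wd
  rw [hf'.fderiv, h.fderiv]
  simp
  ring

lemma wd_mul (f g : ℂ → ℂ) (z : ℂ) (hf : DifferentiableAt ℝ f z)
    (hg : DifferentiableAt ℝ g z) :
    wd (fun w => f w * g w) z = f z * wd g z + wd f z * g z := by
  have h : HasFDerivAt (fun w => f w * g w) (f z • fderiv ℝ g z + g z • fderiv ℝ f z) z :=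
    hf.hasFDerivAt.mul hg.hasFDerivAt
  unfold wd
  rw [h.fderiv]
  simp
  ring

lemma wd_conj (f : ℂ → ℂ) (z : ℂ) (hf : DifferentiableAt ℝ f z) :
    wd (fun w => (starRingEnd ℂ) (f w)) z = (starRingEnd ℂ) (wdb f z) := by
  have h : HasFDerivAt (fun w => (starRingEnd ℂ) (f w))
      ((Complex.conjCLE : ℂ →L[ℝ] ℂ).comp (fderiv ℝ f z)) z :=
    (Complex.conjCLE : ℂ →L[ℝ] ℂ).hasFDerivAt.comp z hf.hasFDerivAt
  have h2 : (starRingEnd ℂ) (2 : ℂ) = 2 := Complex.conj_ofNat 2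
  unfold wd wdb
  rw [h.fderiv]
  simp [h2]
  ring

lemma wd_const' (c z : ℂ) : wd (fun _ => c) z = 0 := by
  simp [wd]

lemma wdb_const' (c z : ℂ) : wdb (fun _ => c) z = 0 := by
  simp [wdb]

lemma wdb_wd_comm (f : ℂ → ℂ) (z : ℂ) (hf : ContDiffAt ℝ (⊤ : ℕ∞) f z) :
    wdb (fun w => wd f w) z = wd (fun w => wdb f w) z := by
  have hs : IsSymmSndFDerivAt ℝ f z := hf.isSymmSndFDerivAt (by
    rw [minSmoothness_of_isRCLikeNormedField]
    exact WithTop.coe_le_coe.2 (le_top : (2 : ℕ∞) ≤ ⊤))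
  have hd : DifferentiableAt ℝ (fderiv ℝ f) z :=
    (hf.fderiv_right (m := 1) (WithTop.coe_le_coe.2 (le_top : (1 + 1 : ℕ∞) ≤ ⊤))).differentiableAt (by simp)
  have h1 : ∀ v : ℂ, HasFDerivAt (fun w => fderiv ℝ f w v)
      ((ContinuousLinearMap.apply ℝ ℂ v).comp (fderiv ℝ (fderiv ℝ f) z)) z := fun v =>
    (ContinuousLinearMap.apply ℝ ℂ v).hasFDerivAt.comp z hd.hasFDerivAt
  have ha := (((h1 1).sub ((h1 Complex.I).const_mul Complex.I)).const_mul (1 / 2 : ℂ))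
  have hb := (((h1 1).add ((h1 Complex.I).const_mul Complex.I)).const_mul (1 / 2 : ℂ))
  have e := hs 1 Complex.I
  unfold wd wdb
  have ha' : fderiv ℝ (fun w => (1 / 2 : ℂ) * (fderiv ℝ f w 1 - Complex.I * fderiv ℝ f w Complex.I))
      z = _ := HasFDerivAt.fderiv ha
  have hb' : fderiv ℝ (fun w => (1 / 2 : ℂ) * (fderiv ℝ f w 1 + Complex.I * fderiv ℝ f w Complex.I))
      z = _ := HasFDerivAt.fderiv hb
  rw [ha', hb']
  simp
  rw [e]
  ring

/-- cyclic successor -/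
def cs (n : ℕ) (hn : 3 ≤ n) (j : Fin n) : Fin n :=
  if h : (j : ℕ) + 1 < n then ⟨j + 1, h⟩ else ⟨0, by omega⟩

/-- cyclic predecessor -/
def cp (n : ℕ) (hn : 3 ≤ n) (j : Fin n) : Fin n :=
  if 0 < (j : ℕ) then ⟨j - 1, by omega⟩ else ⟨n - 1, by omega⟩

lemma cs_eq_iff (n : ℕ) (hn : 3 ≤ n) (i j : Fin n) : i = cs n hn j ↔ cp n hn i = j := by
  unfold cs cp
  split_ifs <;> simp only [Fin.ext_iff] <;> omega

lemma cs_ne (n : ℕ) (hn : 3 ≤ n) (j : Fin n) : cs n hn j ≠ j := by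
  unfold cs
  split_ifs <;> simp only [ne_eq, Fin.ext_iff] <;> omega

lemma cs_cs_ne (n : ℕ) (hn : 3 ≤ n) (j : Fin n) : cs n hn (cs n hn j) ≠ j := by
  unfold cs
  by_cases h : (j : ℕ) + 1 < n
  · rw [dif_pos h]
    by_cases h2 : (j : ℕ) + 1 + 1 < n
    · rw [dif_pos h2]
      simp only [ne_eq, Fin.ext_iff]
      omega
    · rw [dif_neg h2]
      simp only [ne_eq, Fin.ext_iff]
      omega
  · rw [dif_neg h]
    split_ifs <;> simp only [ne_eq, Fin.ext_iff] <;> omega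

/-- superdiagonal coefficients of `A_z` -/
noncomputable def ca (n : ℕ) (u : ℂ → ℂ) (j : Fin n) (z : ℂ) : ℂ :=
  if (j : ℕ) + 1 < n then 1 else u z

/-- subdiagonal coefficients of `A_zb` -/
noncomputable def cb (n : ℕ) (hn : 3 ≤ n) (φ : Fin n → ℂ → ℝ) (u : ℂ → ℂ) (j : Fin n)
    (z : ℂ) : ℂ :=
  (if (j : ℕ) + 1 < n then 1 else (starRingEnd ℂ) (u z)) *
    ((Real.exp (φ j z - φ (cs n hn j) z) : ℝ) : ℂ)

lemma catAz_apply (n : ℕ) (hn : 3 ≤ n) (φ : Fin n → ℂ → ℝ) (u : ℂ → ℂ) (z : ℂ) (i j : Fin n) :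
    catAz n hn φ u z i j = if i = j then wd (fun w => ((φ i w : ℝ) : ℂ)) z
      else if j = cs n hn i then ca n u i z else 0 := by
  unfold catAz ca cs
  simp only [Matrix.of_apply]
  by_cases hij : i = j
  · simp [hij]
  · rw [if_neg hij, if_neg hij]
    by_cases h : (i : ℕ) + 1 < n
    · rw [dif_pos h, if_pos h]
      by_cases h2 : (j : ℕ) = i + 1
      · rw [if_pos h2, if_pos (Fin.ext h2)]
      · rw [if_neg h2, if_neg (by omega), if_neg (by simpa [Fin.ext_iff] using h2)]
    · rw [dif_neg h, if_neg h, if_neg (by omega)]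
      by_cases h2 : (j : ℕ) = 0
      · rw [if_pos (by omega), if_pos (Fin.ext h2)]
      · rw [if_neg (by omega), if_neg (by simpa [Fin.ext_iff] using h2)]

lemma catAzb_apply (n : ℕ) (hn : 3 ≤ n) (φ : Fin n → ℂ → ℝ) (u : ℂ → ℂ) (z : ℂ) (i j : Fin n) :
    catAzb n hn φ u z i j = if i = cs n hn j then cb n hn φ u j z else 0 := by
  unfold catAzb cb
  simp only [Matrix.of_apply]
  by_cases h : i = cs n hn j
  · rw [if_pos h, ← h]
    unfold cs at h
    split_ifs at h with hj
    · have hi : (i : ℕ) = j + 1 := by simp [h]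
      simp [hi, hj]
    · have hi : i = ⟨0, by omega⟩ := h
      have hj' : j = ⟨n - 1, by omega⟩ := by ext; simp; omega
      have h1 : φ ⟨0, by omega⟩ z = φ i z := by rw [hi]
      have h2 : φ ⟨n - 1, by omega⟩ z = φ j z := congrArg (fun k => φ k z) hj'.symm
      have hi0 : (i : ℕ) = 0 := by rw [hi]
      rw [if_neg (by omega), if_pos (by omega), if_neg hj, h1, h2, neg_sub]
  · rw [if_neg h]
    unfold cs at h
    split_ifs at h with hj <;> simp only [Fin.ext_iff] at h
    · rw [if_neg (by omega), if_neg (by omega)]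
    · rw [if_neg (by omega), if_neg (by omega)]

lemma curv_apply (n : ℕ) (hn : 3 ≤ n) (φ : Fin n → ℂ → ℝ) (u : ℂ → ℂ) (z : ℂ) (i j : Fin n) :
    (mwd (catAzb n hn φ u) z - mwdb (catAz n hn φ u) z +
            (catAz n hn φ u z * catAzb n hn φ u z -
              catAzb n hn φ u z * catAz n hn φ u z)) i j =
    wd (fun w => catAzb n hn φ u w i j) z - wdb (fun w => catAz n hn φ u w i j) z +
      (catAz n hn φ u z i (cs n hn j) * cb n hn φ u j z
        - cb n hn φ u (cp n hn i) z * catAz n hn φ u z (cp n hn i) j) := by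
  simp only [Matrix.add_apply, Matrix.sub_apply, Matrix.mul_apply, mwd, mwdb, Matrix.of_apply]
  congr 2
  · simp only [catAzb_apply]
    simp
  · simp only [catAzb_apply, cs_eq_iff]
    simp

lemma wd_cb (n : ℕ) (hn : 3 ≤ n) (φ : Fin n → ℂ → ℝ) (u : ℂ → ℂ) (z : ℂ) (j : Fin n)
    (hφ : ∀ i, DifferentiableAt ℝ (φ i) z) (hu : DifferentiableAt ℝ u z) :
    wd (cb n hn φ u j) z = cb n hn φ u j z *
      (wd (fun w => (φ j w : ℂ)) z - wd (fun w => (φ (cs n hn j) w : ℂ)) z) +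
      (if (j : ℕ) + 1 < n then 0 else (starRingEnd ℂ) (wdb u z)) *
        ((Real.exp (φ j z - φ (cs n hn j) z) : ℝ) : ℂ) := by
  have hd : DifferentiableAt ℝ (fun w => φ j w - φ (cs n hn j) w) z := (hφ _).sub (hφ _)
  have h1 := wd_ofReal_exp _ z hd
  rw [wd_ofReal_sub _ _ z (hφ _) (hφ _)] at h1
  have he : DifferentiableAt ℝ
      (fun w => ((Real.exp (φ j w - φ (cs n hn j) w) : ℝ) : ℂ)) z :=
    Complex.ofRealCLM.differentiableAt.comp z hd.exp
  unfold cb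
  split_ifs with h
  · simp only [one_mul]
    rw [h1]; ring
  · have hc : DifferentiableAt ℝ (fun w => (starRingEnd ℂ) (u w)) z :=
      (Complex.conjCLE : ℂ →L[ℝ] ℂ).differentiableAt.comp z hu
    rw [wd_mul _ _ z hc he, h1, wd_conj _ z hu]
    ring

lemma curv_diag (n : ℕ) (hn : 3 ≤ n) (φ : Fin n → ℂ → ℝ) (u : ℂ → ℂ) (z : ℂ) (i : Fin n)
    (hφ : ContDiffAt ℝ (⊤ : ℕ∞) (φ i) z) :
    (mwd (catAzb n hn φ u) z - mwdb (catAz n hn φ u) z +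
            (catAz n hn φ u z * catAzb n hn φ u z -
              catAzb n hn φ u z * catAz n hn φ u z)) i i =
    - wd (fun w => wdb (fun v => ((φ i v : ℝ) : ℂ)) w) z
      + (ca n u i z * cb n hn φ u i z - cb n hn φ u (cp n hn i) z * ca n u (cp n hn i) z) := by
  have hp : i = cs n hn (cp n hn i) := (cs_eq_iff n hn _ _).2 rfl
  have hpi : cp n hn i ≠ i := fun h => cs_ne n hn (cp n hn i) (by rw [← hp, h])
  have h1 : ContDiffAt ℝ (⊤ : ℕ∞) (fun v => ((φ i v : ℝ) : ℂ)) z :=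
    Complex.ofRealCLM.contDiff.contDiffAt.comp z hφ
  rw [curv_apply]
  simp only [catAz_apply, catAzb_apply]
  simp only [if_pos hp, if_neg hpi, if_neg (cs_ne n hn i).symm, if_true]
  simp only [if_neg (cs_ne n hn i).symm, wd_const']
  rw [wdb_wd_comm _ z h1]
  ring

lemma curv_sup (n : ℕ) (hn : 3 ≤ n) (φ : Fin n → ℂ → ℝ) (u : ℂ → ℂ) (z : ℂ) (i j : Fin n)
    (hij : i ≠ j) (hφ : ∀ i, DifferentiableAt ℝ (φ i) z) (hu : DifferentiableAt ℝ u z) :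
    (mwd (catAzb n hn φ u) z - mwdb (catAz n hn φ u) z +
            (catAz n hn φ u z * catAzb n hn φ u z -
              catAzb n hn φ u z * catAz n hn φ u z)) i j =
    if i = cs n hn j then
      (if (j : ℕ) + 1 < n then 0 else (starRingEnd ℂ) (wdb u z)) *
        ((Real.exp (φ j z - φ (cs n hn j) z) : ℝ) : ℂ)
    else if j = cs n hn i then
      (if (i : ℕ) + 1 < n then 0 else - wdb u z)
    else 0 := by
  rw [curv_apply]
  simp only [catAz_apply, catAzb_apply]
  have hinj : cs n hn j ≠ cs n hn i := by
    intro h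
    rw [cs_eq_iff] at h
    exact hij (h.symm.trans ((cs_eq_iff n hn _ _).1 rfl))
  have hp : i = cs n hn (cp n hn i) := (cs_eq_iff n hn _ _).2 rfl
  have hjp : j ≠ cs n hn (cp n hn i) := by rw [← hp]; exact hij.symm
  simp only [if_neg hij, if_neg hjp, if_neg hinj]
  by_cases h : i = cs n hn j
  · have h2 : cp n hn i = j := (cs_eq_iff n hn _ _).1 h
    have h3 : j ≠ cs n hn i := by rw [h]; exact (cs_cs_ne n hn j).symm
    simp only [if_pos h, if_neg h3, h2, if_true, wdb_const']
    have := wd_cb n hn φ u z j hφ hu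
    rw [show (fun w => cb n hn φ u j w) = cb n hn φ u j from rfl, this, ← h]
    ring
  · have h2 : cp n hn i ≠ j := fun h' => h ((cs_eq_iff n hn _ _).2 h')
    simp only [if_neg h, if_neg h2, wd_const']
    by_cases h3 : j = cs n hn i
    · simp only [if_pos h3, ca]
      split_ifs with h4
      · simp [wdb_const']
      · simp
    · simp only [if_neg h3, wdb_const']
      simp

lemma toda_rhs (n : ℕ) (hn : 3 ≤ n) (φ : Fin n → ℂ → ℝ) (u : ℂ → ℂ) (z : ℂ) (i : Fin n) :
    ca n u i z * cb n hn φ u i z - cb n hn φ u (cp n hn i) z * ca n u (cp n hn i) z =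
            (if h : (i : ℕ) + 1 < n then
                ((Real.exp (φ i z - φ ⟨(i : ℕ) + 1, h⟩ z) : ℝ) : ℂ)
              else 0) -
            (if 0 < (i : ℕ) then
                ((Real.exp
                    (φ ⟨(i : ℕ) - 1, lt_of_le_of_lt (Nat.sub_le _ _) i.isLt⟩ z - φ i z) : ℝ) : ℂ)
              else 0) -
            ((Complex.normSq (u z) : ℝ) : ℂ) *
              ((Real.exp (-(φ ⟨0, by omega⟩ z - φ ⟨n - 1, by omega⟩ z)) : ℝ) : ℂ) *
              ((if (i : ℕ) = 0 then 1 else 0) - (if (i : ℕ) = n - 1 then 1 else 0)) := by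
  have hp : cs n hn (cp n hn i) = i := ((cs_eq_iff n hn _ _).2 rfl).symm
  have hN : ((Complex.normSq (u z) : ℝ) : ℂ) = u z * (starRingEnd ℂ) (u z) :=
    (Complex.mul_conj _).symm
  unfold ca cb
  rw [hp, hN, neg_sub]
  have h3 : n - 1 + 1 = n := by omega
  by_cases h0 : 0 < (i : ℕ)
  · have e1 : cp n hn i = ⟨i - 1, by omega⟩ := by simp [cp, h0]
    have e2 : (i : ℕ) - 1 + 1 = i := by omega
    have e3 : ¬ (i : ℕ) = 0 := by omega
    by_cases h1 : (i : ℕ) + 1 < n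
    · have e4 : cs n hn i = ⟨i + 1, h1⟩ := by simp [cs, h1]
      have e5 : ¬ (i : ℕ) = n - 1 := by omega
      rw [e1, e4, dif_pos h1]
      simp only [e2, if_pos h0, if_pos h1, if_neg e3, if_neg e5, i.isLt, if_true]
      ring
    · have e4 : cs n hn i = ⟨0, by omega⟩ := by simp [cs, h1]
      have e5 : (i : ℕ) = n - 1 := by omega
      have e6 : i = ⟨n - 1, by omega⟩ := Fin.ext e5
      have e7 : φ ⟨n - 1, by omega⟩ z = φ i z := by rw [← e6]
      rw [e1, e4, dif_neg h1, e7]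
      simp only [e2, if_pos h0, if_neg h1, if_neg e3, if_pos e5, i.isLt, if_true]
      ring
  · have e1 : cp n hn i = ⟨n - 1, by omega⟩ := by simp [cp, h0]
    have e3 : (i : ℕ) = 0 := by omega
    have h1 : (i : ℕ) + 1 < n := by omega
    have e4 : cs n hn i = ⟨i + 1, h1⟩ := by simp [cs, h1]
    have e5 : ¬ (i : ℕ) = n - 1 := by omega
    have e7 : φ ⟨0, by omega⟩ z = φ i z := by
      have e6 : i = ⟨0, by omega⟩ := Fin.ext e3
      rw [← e6]
    rw [e1, e4, dif_pos h1, e7]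
    simp only [h3, if_neg h0, if_pos h1, if_pos e3, if_neg e5, lt_irrefl, if_false]
    ring

/-- The Conformal Affine Toda connection `d + A_z dz + A_{z̄} dz̄` is flat if and only if
`∂̄u = 0` and the Conformal Affine Toda equations
`∂∂̄φᵢ = e^{φᵢ−φᵢ₊₁} − e^{φᵢ₋₁−φᵢ} − |u|²e^{−(φ₁−φₙ)}(δ_{i,1} − δ_{i,n})` hold. -/
theorem conformal_affine_toda_flatness (n : ℕ) (hn : 3 ≤ n) (Ω : Set ℂ) (hΩ : IsOpen Ω)
    (φ : Fin n → ℂ → ℝ) (hφ : ∀ i, ContDiffOn ℝ (⊤ : ℕ∞) (φ i) Ω)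
    (hsum : ∀ z ∈ Ω, ∑ i, φ i z = 0)
    (u : ℂ → ℂ) (hu : ContDiffOn ℝ (⊤ : ℕ∞) u Ω) :
    (∀ z ∈ Ω,
        mwd (catAzb n hn φ u) z - mwdb (catAz n hn φ u) z +
            (catAz n hn φ u z * catAzb n hn φ u z -
              catAzb n hn φ u z * catAz n hn φ u z) = 0) ↔
      ((∀ z ∈ Ω, wdb u z = 0) ∧
        (∀ z ∈ Ω, ∀ i : Fin n,
          wd (fun w => wdb (fun v => ((φ i v : ℝ) : ℂ)) w) z =
            (if h : (i : ℕ) + 1 < n then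
                ((Real.exp (φ i z - φ ⟨(i : ℕ) + 1, h⟩ z) : ℝ) : ℂ)
              else 0) -
            (if 0 < (i : ℕ) then
                ((Real.exp
                    (φ ⟨(i : ℕ) - 1, lt_of_le_of_lt (Nat.sub_le _ _) i.isLt⟩ z - φ i z) : ℝ) : ℂ)
              else 0) -
            ((Complex.normSq (u z) : ℝ) : ℂ) *
              ((Real.exp (-(φ ⟨0, by omega⟩ z - φ ⟨n - 1, by omega⟩ z)) : ℝ) : ℂ) *
              ((if (i : ℕ) = 0 then 1 else 0) - (if (i : ℕ) = n - 1 then 1 else 0)))) := by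
  have hcφ : ∀ z ∈ Ω, ∀ i, ContDiffAt ℝ (⊤ : ℕ∞) (φ i) z := fun z hz i =>
    (hφ i).contDiffAt (hΩ.mem_nhds hz)
  have hdφ : ∀ z ∈ Ω, ∀ i, DifferentiableAt ℝ (φ i) z := fun z hz i =>
    (hcφ z hz i).differentiableAt (by simp)
  have hdu : ∀ z ∈ Ω, DifferentiableAt ℝ u z := fun z hz =>
    (hu.contDiffAt (hΩ.mem_nhds hz)).differentiableAt (by simp)
  constructor
  · intro H
    refine ⟨fun z hz => ?_, fun z hz i => ?_⟩
    · have h := congrFun (congrFun (H z hz) ⟨n - 1, by omega⟩) ⟨0, by omega⟩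
      rw [curv_sup n hn φ u z _ _ (by simp [Fin.ext_iff]; omega) (hdφ z hz) (hdu z hz)] at h
      have h3 : n - 1 + 1 = n := by omega
      have h4 : 0 + 1 < n := by omega
      have h5 : ¬ n - 1 = 0 + 1 := by omega
      have h6 : (⟨n - 1, by omega⟩ : Fin n) ≠ cs n hn ⟨0, by omega⟩ := by
        unfold cs
        rw [dif_pos h4]
        simpa [Fin.ext_iff] using h5
      have h7 : (⟨0, by omega⟩ : Fin n) = cs n hn ⟨n - 1, by omega⟩ := by
        unfold cs
        rw [dif_neg (by simp [h3])]
      rw [if_neg h6, if_pos h7, if_neg (by simp [h3])] at h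
      simpa using h
    · have h := congrFun (congrFun (H z hz) i) i
      rw [curv_diag n hn φ u z i (hcφ z hz i), toda_rhs] at h
      rw [Matrix.zero_apply] at h
      linear_combination -h
  · rintro ⟨H1, H2⟩ z hz
    ext i j
    rw [Matrix.zero_apply]
    by_cases hij : i = j
    · subst hij
      rw [curv_diag n hn φ u z i (hcφ z hz i), toda_rhs]
      linear_combination -(H2 z hz i)
    · rw [curv_sup n hn φ u z _ _ hij (hdφ z hz) (hdu z hz), H1 z hz]
      simp
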